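/- Let ρ₀ satisfy the stated first-order equation with limits a and b at ∓∞, and let h : ℝ → ℝ be continuous and bounded. Then the function v₁*(z) := ρ₀'(z) · ∫₀^z ρ₀'(ς)^{−2} ( ∫_ς^{+∞} h(τ) ρ₀'(τ) dτ ) dς is well defined, twice continuously differentiable, satisfies −(v₁*)''(z) + f_A(ρ₀(z)) v₁*(z) = h(z) for all z ∈ ℝ, and v₁*(0) = 0. -/

import Mathlib

open Filter MeasureTheory

/-- `f_A(ρ) = (ρ² − a²)(ρ² − b²)(2ρ² − a² − b²) + 2((2ρ² − a² − b²)² + 2(ρ² − a²)(ρ² − b²))ρ²`. -/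
noncomputable def fA (a b ρ : ℝ) : ℝ :=
  (ρ ^ 2 - a ^ 2) * (ρ ^ 2 - b ^ 2) * (2 * ρ ^ 2 - a ^ 2 - b ^ 2)
    + 2 * ((2 * ρ ^ 2 - a ^ 2 - b ^ 2) ^ 2
        + 2 * (ρ ^ 2 - a ^ 2) * (ρ ^ 2 - b ^ 2)) * ρ ^ 2

/-- `v₁*(z) = ρ₀'(z) ∫₀^z ρ₀'(ς)⁻² (∫_ς^∞ h(τ)ρ₀'(τ) dτ) dς`. -/
noncomputable def v1star (ρ₀ h : ℝ → ℝ) (z : ℝ) : ℝ :=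
  deriv ρ₀ z *
    ∫ ς in (0:ℝ)..z, ((deriv ρ₀ ς) ^ 2)⁻¹ * ∫ τ in Set.Ioi ς, h τ * deriv ρ₀ τ

/-!
Differentiating the energy identity `ρ₀'² / 2 = W(ρ₀)`, where `W(ρ) = (ρ² - a²)²(ρ² - b²)² / 4`,
gives `ρ₀'' = W'(ρ₀)` and then `ρ₀''' = W''(ρ₀) ρ₀'`. Since `W'' = f_A`, the nowhere vanishing
function `q = ρ₀'` solves the homogeneous equation `-q'' + f_A(ρ₀) q = 0`. Reduction of order then
solves the inhomogeneous one: with `v = q u` it becomes `(q² u')' = -h q`, that is, `q² u'` is a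
primitive of `-h q`, here the one vanishing at `+∞`. It exists because `h` is bounded and `ρ₀'` is
integrable near `+∞`.
-/

section Primitives

variable {E : Type*} [NormedAddCommGroup E] {g : ℝ → E}

theorem integrableOn_Ioi_of_integrableAtFilter_atTop (hg : LocallyIntegrable g)
    (hint : IntegrableAtFilter g atTop) (x : ℝ) : IntegrableOn g (Set.Ioi x) :=
  (integrableOn_Ici_iff_integrableAtFilter_atTop.2
    ⟨hint, hg.locallyIntegrableOn _⟩).mono_set Set.Ioi_subset_Ici_self

variable [NormedSpace ℝ E] [CompleteSpace E]

theorem hasDerivAt_integral_Ioi (hg : Continuous g) (hint : IntegrableAtFilter g atTop) (x : ℝ) :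
    HasDerivAt (fun y => ∫ t in Set.Ioi y, g t) (-g x) x := by
  have hIoi := integrableOn_Ioi_of_integrableAtFilter_atTop hg.locallyIntegrable hint
  have hsplit : (fun y => ∫ t in Set.Ioi y, g t) =
      fun y => (∫ t in Set.Ioi x, g t) - ∫ t in x..y, g t := by
    funext y
    exact eq_sub_of_add_eq' (intervalIntegral.integral_interval_add_Ioi (hIoi x) (hIoi y))
  rw [hsplit]
  exact (hg.integral_hasStrictDerivAt x x).hasDerivAt.const_sub _

theorem contDiff_one_integral_Ioi (hg : Continuous g) (hint : IntegrableAtFilter g atTop) :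
    ContDiff ℝ 1 (fun y => ∫ t in Set.Ioi y, g t) := by
  have hderiv := hasDerivAt_integral_Ioi hg hint
  refine contDiff_one_iff_deriv.2 ⟨fun x => (hderiv x).differentiableAt, ?_⟩
  rw [funext fun x => (hderiv x).deriv]
  exact hg.neg

theorem contDiff_succ_intervalIntegral {n : ℕ} (hg : ContDiff ℝ n g) (a : ℝ) :
    ContDiff ℝ (n + 1) (fun x => ∫ t in a..x, g t) := by
  have hderiv (x : ℝ) := (hg.continuous.integral_hasStrictDerivAt a x).hasDerivAt
  refine contDiff_succ_iff_deriv.2 ⟨fun x => (hderiv x).differentiableAt, by simp, ?_⟩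
  rwa [funext fun x => (hderiv x).deriv]

end Primitives

section ReductionOfOrder

variable {𝕜 : Type*} [NontriviallyNormedField 𝕜] {q q' u J : 𝕜 → 𝕜} {z : 𝕜}

theorem hasDerivAt_mul_of_hasDerivAt_inv_sq_mul (hz : q z ≠ 0) (hq : HasDerivAt q (q' z) z)
    (hu : HasDerivAt u ((q z ^ 2)⁻¹ * J z) z) :
    HasDerivAt (fun x => q x * u x) (q' z * u z + J z / q z) z :=
  (hq.mul hu).congr_deriv (by field_simp)

theorem hasDerivAt_mul_add_div_of_hasDerivAt_inv_sq_mul {V h : 𝕜} (hz : q z ≠ 0)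
    (hq : HasDerivAt q (q' z) z) (hq' : HasDerivAt q' (V * q z) z)
    (hu : HasDerivAt u ((q z ^ 2)⁻¹ * J z) z) (hJ : HasDerivAt J (-(h * q z)) z) :
    HasDerivAt (fun x => q' x * u x + J x / q x) (V * (q z * u z) - h) z :=
  ((hq'.mul hu).add (hJ.div hq hz)).congr_deriv (by field_simp; ring)

theorem deriv_deriv_mul_of_hasDerivAt_inv_sq_mul {V h : 𝕜 → 𝕜} (hne : ∀ x, q x ≠ 0)
    (hq : ∀ x, HasDerivAt q (q' x) x) (hq' : ∀ x, HasDerivAt q' (V x * q x) x)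
    (hu : ∀ x, HasDerivAt u ((q x ^ 2)⁻¹ * J x) x) (hJ : ∀ x, HasDerivAt J (-(h x * q x)) x)
    (z : 𝕜) : deriv (deriv fun x => q x * u x) z = V z * (q z * u z) - h z := by
  have hfirst : (deriv fun x => q x * u x) = fun x => q' x * u x + J x / q x :=
    funext fun x => (hasDerivAt_mul_of_hasDerivAt_inv_sq_mul (hne x) (hq x) (hu x)).deriv
  rw [hfirst]
  exact (hasDerivAt_mul_add_div_of_hasDerivAt_inv_sq_mul
    (hne z) (hq z) (hq' z) (hu z) (hJ z)).deriv

end ReductionOfOrder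

section AutonomousEquation

variable {𝕜 : Type*} [NontriviallyNormedField 𝕜]

theorem contDiff_succ_of_deriv_eq_comp {E : Type*} [NormedAddCommGroup E] [NormedSpace 𝕜 E]
    {F : E → E} {γ : 𝕜 → E} {n : ℕ} (hF : ContDiff 𝕜 n F) (hγ : Differentiable 𝕜 γ)
    (hode : deriv γ = F ∘ γ) : ContDiff 𝕜 (n + 1) γ := by
  refine contDiff_succ_iff_deriv.2 ⟨hγ, by simp, hode ▸ ?_⟩
  induction n with
  | zero => exact contDiff_zero.2 (hF.continuous.comp hγ.continuous)
  | succ n ih =>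
    have hFn : ContDiff 𝕜 n F := hF.of_le (by exact_mod_cast n.le_succ)
    have hγn : ContDiff 𝕜 (n + 1) γ := contDiff_succ_iff_deriv.2 ⟨hγ, by simp, hode ▸ ih hFn⟩
    exact hF.comp (by exact_mod_cast hγn)

theorem deriv_deriv_eq_of_half_sq_deriv_eq_comp [CharZero 𝕜] {W ρ : 𝕜 → 𝕜} {W' z : 𝕜}
    (hρ' : DifferentiableAt 𝕜 (deriv ρ) z) (henergy : ∀ x, deriv ρ x ^ 2 / 2 = W (ρ x))
    (hW : HasDerivAt W W' (ρ z)) (hz : deriv ρ z ≠ 0) : deriv (deriv ρ) z = W' := by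
  have hkinetic : HasDerivAt (fun x => deriv ρ x ^ 2 / 2) (deriv (deriv ρ) z * deriv ρ z) z :=
    ((hρ'.hasDerivAt.pow 2).div_const 2).congr_deriv (by push_cast; ring)
  have hpotential : HasDerivAt (fun x => deriv ρ x ^ 2 / 2) (W' * deriv ρ z) z := by
    rw [funext henergy]
    exact hW.comp z (differentiableAt_of_deriv_ne_zero hz).hasDerivAt
  exact mul_right_cancel₀ hz (hkinetic.unique hpotential)

end AutonomousEquation

section Profile

/-- The potential `W` with minima at `±a` and `±b` for which the profile equation is the
equipartition of energy `ρ₀'² / 2 = W(ρ₀)`. -/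
noncomputable def potential (a b ρ : ℝ) : ℝ :=
  ((ρ ^ 2 - a ^ 2) * (ρ ^ 2 - b ^ 2)) ^ 2 / 4

/-- The first derivative `W'` of `potential a b`, in factored form; `fA a b` is the second one. -/
noncomputable def potentialDeriv (a b ρ : ℝ) : ℝ :=
  ρ * (2 * ρ ^ 2 - a ^ 2 - b ^ 2) * ((ρ ^ 2 - a ^ 2) * (ρ ^ 2 - b ^ 2))

/-- The right-hand side `F` of the profile equation `ρ₀' = F(ρ₀)`. -/
noncomputable def profileSpeed (a b ρ : ℝ) : ℝ :=
  Real.sqrt 2 / 2 * (ρ ^ 2 - a ^ 2) * (b ^ 2 - ρ ^ 2)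

variable {a b : ℝ}

theorem hasDerivAt_potential (ρ : ℝ) :
    HasDerivAt (potential a b) (potentialDeriv a b ρ) ρ := by
  have hsq := hasDerivAt_pow 2 ρ
  refine ((((hsq.sub_const (a ^ 2)).mul (hsq.sub_const (b ^ 2))).pow 2).div_const 4).congr_deriv ?_
  simp only [potentialDeriv, Pi.mul_apply]
  ring

theorem hasDerivAt_potentialDeriv (ρ : ℝ) :
    HasDerivAt (potentialDeriv a b) (fA a b ρ) ρ := by
  have hsq := hasDerivAt_pow 2 ρ
  refine (((hasDerivAt_id ρ).mul (((hsq.const_mul 2).sub_const (a ^ 2)).sub_const (b ^ 2))).mul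
    ((hsq.sub_const (a ^ 2)).mul (hsq.sub_const (b ^ 2)))).congr_deriv ?_
  simp only [fA, Pi.mul_apply, id]
  ring

theorem contDiff_profileSpeed {n : WithTop ℕ∞} : ContDiff ℝ n (profileSpeed a b) := by
  unfold profileSpeed
  fun_prop

theorem half_sq_profileSpeed (ρ : ℝ) : profileSpeed a b ρ ^ 2 / 2 = potential a b ρ := by
  have hsqrt : Real.sqrt 2 ^ 2 = 2 := Real.sq_sqrt zero_le_two
  simp only [profileSpeed, potential]
  linear_combination ((ρ ^ 2 - a ^ 2) * (b ^ 2 - ρ ^ 2)) ^ 2 / 8 * hsqrt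

theorem profileSpeed_pos {ρ : ℝ} (ha : 0 ≤ a) (haρ : a < ρ) (hρb : ρ < b) :
    0 < profileSpeed a b ρ := by
  have hsq_a : 0 < ρ ^ 2 - a ^ 2 := sub_pos.2 (by gcongr)
  have hsq_b : 0 < b ^ 2 - ρ ^ 2 := sub_pos.2 (pow_lt_pow_left₀ hρb (ha.trans haρ.le) two_ne_zero)
  unfold profileSpeed
  positivity

variable {ρ₀ : ℝ → ℝ}

theorem contDiff_three_of_deriv_eq_profileSpeed (hρ₀ : Differentiable ℝ ρ₀)
    (hode : ∀ z, deriv ρ₀ z = profileSpeed a b (ρ₀ z)) : ContDiff ℝ 3 ρ₀ :=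
  contDiff_succ_of_deriv_eq_comp (n := 2) contDiff_profileSpeed hρ₀ (funext hode)

theorem deriv_deriv_deriv_of_deriv_eq_profileSpeed (hρ₀ : Differentiable ℝ ρ₀)
    (hode : ∀ z, deriv ρ₀ z = profileSpeed a b (ρ₀ z)) (hne : ∀ z, deriv ρ₀ z ≠ 0) (z : ℝ) :
    deriv (deriv (deriv ρ₀)) z = fA a b (ρ₀ z) * deriv ρ₀ z := by
  have hq : ContDiff ℝ 2 (deriv ρ₀) :=
    ContDiff.deriv' (contDiff_three_of_deriv_eq_profileSpeed hρ₀ hode)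
  have henergy (x : ℝ) : deriv ρ₀ x ^ 2 / 2 = potential a b (ρ₀ x) := by
    rw [hode, half_sq_profileSpeed]
  have hnewton : deriv (deriv ρ₀) = potentialDeriv a b ∘ ρ₀ := funext fun x =>
    deriv_deriv_eq_of_half_sq_deriv_eq_comp (hq.differentiable two_ne_zero x) henergy
      (hasDerivAt_potential (ρ₀ x)) (hne x)
  rw [hnewton]
  exact ((hasDerivAt_potentialDeriv (ρ₀ z)).comp z (hρ₀ z).hasDerivAt).deriv

end Profile

section Solution

variable {ρ₀ h : ℝ → ℝ}

theorem integrableAtFilter_atTop_mul_deriv_of_bounded {l M : ℝ} (hρ₀ : Differentiable ℝ ρ₀)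
    (hmono : ∀ z, 0 ≤ deriv ρ₀ z) (htop : Tendsto ρ₀ atTop (nhds l))
    (hh : AEStronglyMeasurable h) (hM : ∀ z, |h z| ≤ M) :
    IntegrableAtFilter (fun τ => h τ * deriv ρ₀ τ) atTop := by
  have hderiv : IntegrableOn (deriv ρ₀) (Set.Ioi 0) :=
    integrableOn_Ioi_deriv_of_nonneg' (fun x _ => (hρ₀ x).hasDerivAt) (fun x _ => hmono x) htop
  exact ⟨Set.Ioi 0, Ioi_mem_atTop 0, hderiv.bdd_mul hh.restrict (Eventually.of_forall hM)⟩

theorem contDiff_one_v1star_integrand (hρ₀ : ContDiff ℝ 2 ρ₀) (hne : ∀ z, deriv ρ₀ z ≠ 0)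
    (hh : Continuous h) (hint : IntegrableAtFilter (fun τ => h τ * deriv ρ₀ τ) atTop) :
    ContDiff ℝ 1 (fun ς => (deriv ρ₀ ς ^ 2)⁻¹ * ∫ τ in Set.Ioi ς, h τ * deriv ρ₀ τ) := by
  have hq : ContDiff ℝ 1 (deriv ρ₀) := ContDiff.deriv' hρ₀
  exact ((hq.pow 2).inv fun z => pow_ne_zero 2 (hne z)).mul
    (contDiff_one_integral_Ioi (hh.mul hq.continuous) hint)

theorem contDiff_two_v1star (hρ₀ : ContDiff ℝ 3 ρ₀) (hne : ∀ z, deriv ρ₀ z ≠ 0)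
    (hh : Continuous h) (hint : IntegrableAtFilter (fun τ => h τ * deriv ρ₀ τ) atTop) :
    ContDiff ℝ 2 (v1star ρ₀ h) := by
  have hq : ContDiff ℝ 2 (deriv ρ₀) := ContDiff.deriv' hρ₀
  have hintegrand := contDiff_one_v1star_integrand (hρ₀.of_le (by norm_num)) hne hh hint
  exact hq.mul (contDiff_succ_intervalIntegral (n := 1) hintegrand 0)

theorem deriv_deriv_v1star {V : ℝ → ℝ} (hρ₀ : ContDiff ℝ 3 ρ₀) (hne : ∀ z, deriv ρ₀ z ≠ 0)
    (hV : ∀ z, deriv (deriv (deriv ρ₀)) z = V z * deriv ρ₀ z)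
    (hh : Continuous h) (hint : IntegrableAtFilter (fun τ => h τ * deriv ρ₀ τ) atTop) (z : ℝ) :
    deriv (deriv (v1star ρ₀ h)) z = V z * v1star ρ₀ h z - h z := by
  have hq : ContDiff ℝ 2 (deriv ρ₀) := ContDiff.deriv' hρ₀
  have hintegrand := contDiff_one_v1star_integrand (hρ₀.of_le (by norm_num)) hne hh hint
  exact deriv_deriv_mul_of_hasDerivAt_inv_sq_mul hne
    (fun x => (hq.differentiable two_ne_zero x).hasDerivAt)
    (fun x => hV x ▸ (hq.differentiable_deriv_two x).hasDerivAt)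
    (fun x => (hintegrand.continuous.integral_hasStrictDerivAt 0 x).hasDerivAt)
    (hasDerivAt_integral_Ioi (hh.mul hq.continuous) hint) z

theorem statement11_general {V : ℝ → ℝ} (hρ₀ : ContDiff ℝ 3 ρ₀) (hne : ∀ z, deriv ρ₀ z ≠ 0)
    (hV : ∀ z, deriv (deriv (deriv ρ₀)) z = V z * deriv ρ₀ z)
    (hh : Continuous h) (hint : IntegrableAtFilter (fun τ => h τ * deriv ρ₀ τ) atTop) :
    (∀ ς : ℝ, IntegrableOn (fun τ => h τ * deriv ρ₀ τ) (Set.Ioi ς)) ∧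
    (∀ z : ℝ, IntervalIntegrable
      (fun ς => ((deriv ρ₀ ς) ^ 2)⁻¹ * ∫ τ in Set.Ioi ς, h τ * deriv ρ₀ τ)
      volume 0 z) ∧
    ContDiff ℝ 2 (v1star ρ₀ h) ∧
    (∀ z : ℝ, -(deriv (deriv (v1star ρ₀ h)) z) + V z * v1star ρ₀ h z = h z) ∧
    v1star ρ₀ h 0 = 0 := by
  have hhq : Continuous (fun τ => h τ * deriv ρ₀ τ) :=
    hh.mul (hρ₀.continuous_deriv (by norm_num))
  have hintegrand := contDiff_one_v1star_integrand (hρ₀.of_le (by norm_num)) hne hh hint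
  refine ⟨integrableOn_Ioi_of_integrableAtFilter_atTop hhq.locallyIntegrable hint,
    hintegrand.continuous.intervalIntegrable 0, contDiff_two_v1star hρ₀ hne hh hint,
    fun z => ?_, by simp [v1star]⟩
  rw [deriv_deriv_v1star hρ₀ hne hV hh hint]
  ring

end Solution

/-- For continuous bounded `h`, the function `v₁*` is well defined,
`C²`, solves `−(v₁*)'' + f_A(ρ₀)v₁* = h` on `ℝ`, and satisfies `v₁*(0) = 0`. -/
theorem statement11 (a b : ℝ) (ha : 0 < a) (hab : a < b) (ρ₀ : ℝ → ℝ)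
    (hreg : ContDiff ℝ 1 ρ₀)
    (hderiv : ∀ z, deriv ρ₀ z =
      Real.sqrt 2 / 2 * ((ρ₀ z) ^ 2 - a ^ 2) * (b ^ 2 - (ρ₀ z) ^ 2))
    (hbnd : ∀ z, a < ρ₀ z ∧ ρ₀ z < b)
    (hbot : Tendsto ρ₀ atBot (nhds a))
    (htop : Tendsto ρ₀ atTop (nhds b))
    (h : ℝ → ℝ) (hh : Continuous h) (hhbd : ∃ M, ∀ z, |h z| ≤ M) :
    (∀ ς : ℝ, IntegrableOn (fun τ => h τ * deriv ρ₀ τ) (Set.Ioi ς)) ∧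
    (∀ z : ℝ, IntervalIntegrable
      (fun ς => ((deriv ρ₀ ς) ^ 2)⁻¹ * ∫ τ in Set.Ioi ς, h τ * deriv ρ₀ τ)
      volume 0 z) ∧
    ContDiff ℝ 2 (v1star ρ₀ h) ∧
    (∀ z : ℝ, -(deriv (deriv (v1star ρ₀ h)) z) + fA a b (ρ₀ z) * v1star ρ₀ h z = h z) ∧
    v1star ρ₀ h 0 = 0 := by
  have hρ₀ : Differentiable ℝ ρ₀ := hreg.differentiable one_ne_zero
  have hpos (z : ℝ) : 0 < deriv ρ₀ z :=
    hderiv z ▸ profileSpeed_pos ha.le (hbnd z).1 (hbnd z).2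
  have hne (z : ℝ) : deriv ρ₀ z ≠ 0 := (hpos z).ne'
  obtain ⟨M, hM⟩ := hhbd
  exact statement11_general (contDiff_three_of_deriv_eq_profileSpeed hρ₀ hderiv) hne
    (deriv_deriv_deriv_of_deriv_eq_profileSpeed hρ₀ hderiv hne) hh
    (integrableAtFilter_atTop_mul_deriv_of_bounded hρ₀ (fun z => (hpos z).le) htop
      hh.aestronglyMeasurable hM)
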